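/- Let λ be a partition with |λ| ≥ 2. Then the coefficient of X^{|λ|−2} in the Wronskian Hermite polynomial He_λ equals −c(λ), where c(λ) = Σ_{(i,j)∈λ} (j − i) is the sum of the contents of the boxes of the Young diagram of λ. -/

import Mathlib

/-- A partition: a weakly decreasing list of positive integers. -/
def IsPartition (l : List ℕ) : Prop :=
  l.Pairwise (· ≥ ·) ∧ ∀ x ∈ l, 0 < x

/-- The degree vector of a partition: `n_i = λ_i + ℓ(λ) − i` (here `i` is 0-indexed). -/
def degVec (l : List ℕ) (i : Fin l.length) : ℕ :=
  l.get i + (l.length - 1 - (i : ℕ))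

/-- The Vandermonde determinant `Δ(n_λ) = ∏_{i<j} (n_j − n_i)` of the degree vector. -/
noncomputable def vanderQ (l : List ℕ) : ℚ :=
  ∏ i : Fin l.length, ∏ j : Fin l.length,
    if (i : ℕ) < (j : ℕ) then ((degVec l j : ℚ) - (degVec l i : ℚ)) else 1

/-- The Wronskian Hermite polynomial `He_λ = Wr[He_{n_1},…,He_{n_ℓ}] / Δ(n_λ)`. -/
noncomputable def HeW (l : List ℕ) : Polynomial ℚ :=
  Polynomial.C (vanderQ l)⁻¹ *
    (Matrix.of fun i j : Fin l.length =>
      (⇑Polynomial.derivative)^[(i : ℕ)]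
        ((Polynomial.hermite (degVec l j)).map (Int.castRingHom ℚ))).det

/-- The content sum `c(λ) = Σ_{(i,j)∈λ} (j − i)`, where the cell in (0-indexed)
row `i` and (1-indexed) column `j` has content `j − (i+1)`. -/
def contentSum (l : List ℕ) : ℤ :=
  ∑ i : Fin l.length, ∑ j ∈ Finset.Icc 1 (l.get i), ((j : ℤ) - ((i : ℕ) + 1))

section Aux
open Polynomial Finset

noncomputable def wA {ι : Type*} [DecidableEq ι] (v : ι → ℚ) (s : Finset ι) (j : ι) : ℚ :=
  ∏ k ∈ s.erase j, (1 - 2 / (v j - v k))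

lemma wA_insert_self {ι : Type*} [DecidableEq ι] (v : ι → ℚ) (s : Finset ι) (w : ι) (hw : w ∉ s) :
    wA v (insert w s) w = ∏ k ∈ s, (1 - 2 / (v w - v k)) := by
  rw [wA, Finset.erase_insert hw]

lemma wA_insert_of_mem {ι : Type*} [DecidableEq ι] (v : ι → ℚ) (s : Finset ι) (w : ι) (hw : w ∉ s)
    (j : ι) (hj : j ∈ s) :
    wA v (insert w s) j = (1 - 2 / (v j - v w)) * wA v s j := by
  have hne : w ≠ j := fun h => hw (h ▸ hj)
  rw [wA, Finset.erase_insert_of_ne hne, Finset.prod_insert, wA]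
  simp [hw]

lemma wA_partial {ι : Type*} [DecidableEq ι] (v : ι → ℚ) (hv : Function.Injective v)
    (s : Finset ι) : ∀ z : ℚ, (∀ k ∈ s, z ≠ v k) →
    ∏ k ∈ s, (1 - 2 / (z - v k)) = 1 - 2 * ∑ j ∈ s, wA v s j / (z - v j) := by
  induction s using Finset.induction_on with
  | empty => intro z _; simp
  | insert w s hw ih =>
    intro z hz
    have hzw : z - v w ≠ 0 := sub_ne_zero.2 (hz w (by simp))
    have h1 := ih z (fun k hk => hz k (by simp [hk]))
    have h2 := ih (v w) (fun k hk h => hw (hv h ▸ hk))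
    rw [Finset.prod_insert hw, Finset.sum_insert hw, wA_insert_self v s w hw, h1, h2]
    have h3 : ∑ j ∈ s, wA v (insert w s) j / (z - v j) =
        ∑ j ∈ s, wA v s j / (z - v j) + 2 / (z - v w) * ∑ j ∈ s, wA v s j / (v w - v j)
          - 2 / (z - v w) * ∑ j ∈ s, wA v s j / (z - v j) := by
      rw [Finset.mul_sum, Finset.mul_sum, ← Finset.sum_add_distrib, ← Finset.sum_sub_distrib]
      refine Finset.sum_congr rfl fun j hj => ?_
      rw [wA_insert_of_mem v s w hw j hj]
      have a1 : z - v j ≠ 0 := sub_ne_zero.2 (hz j (by simp [hj]))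
      have a2 : v w - v j ≠ 0 := sub_ne_zero.2 (fun h => hw (hv h ▸ hj))
      have a3 : v j - v w ≠ 0 := sub_ne_zero.2 (fun h => hw (hv h ▸ hj))
      have a4 : v j - v w = -(v w - v j) := by ring
      rw [a4]
      field_simp
      ring
    rw [h3]
    field_simp
    ring

lemma wA_step {ι : Type*} [DecidableEq ι] (v : ι → ℚ) (hv : Function.Injective v)
    (s : Finset ι) (w : ι) (hw : w ∉ s) (f : ℚ → ℚ) (g : ℚ → ℚ)
    (hfg : ∀ j, f (v j) - f (v w) = (v j - v w) * g (v j)) :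
    ∑ j ∈ insert w s, wA v (insert w s) j * f (v j) =
      ∑ j ∈ s, wA v s j * f (v j) + f (v w) - 2 * ∑ j ∈ s, wA v s j * g (v j) := by
  rw [Finset.sum_insert hw, wA_insert_self v s w hw,
    wA_partial v hv s (v w) (fun k hk h => hw (hv h ▸ hk))]
  have h3 : ∑ j ∈ s, wA v (insert w s) j * f (v j) =
      ∑ j ∈ s, wA v s j * f (v j) + 2 * f (v w) * ∑ j ∈ s, wA v s j / (v w - v j)
        - 2 * ∑ j ∈ s, wA v s j * g (v j) := by
    rw [Finset.mul_sum, Finset.mul_sum, ← Finset.sum_add_distrib, ← Finset.sum_sub_distrib]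
    refine Finset.sum_congr rfl fun j hj => ?_
    rw [wA_insert_of_mem v s w hw j hj]
    have a2 : v w - v j ≠ 0 := sub_ne_zero.2 (fun h => hw (hv h ▸ hj))
    have a4 : v j - v w = -(v w - v j) := by ring
    have e : f (v j) = f (v w) + (v j - v w) * g (v j) := by rw [← hfg]; ring
    rw [e, a4]
    field_simp
    ring
  rw [h3]
  ring

lemma wA_sums {ι : Type*} [DecidableEq ι] (v : ι → ℚ) (hv : Function.Injective v)
    (s : Finset ι) :
    ∑ j ∈ s, wA v s j = s.card ∧
    ∑ j ∈ s, wA v s j * v j = ∑ j ∈ s, v j - s.card * (s.card - 1) ∧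
    ∑ j ∈ s, wA v s j * (v j) ^ 2 = ∑ j ∈ s, v j ^ 2 - 2 * (s.card - 1) * ∑ j ∈ s, v j
      + 2 * (s.card * (s.card - 1) * (s.card - 2)) / 3 := by
  induction s using Finset.induction_on with
  | empty => simp
  | insert w s hw ih =>
    obtain ⟨i0, i1, i2⟩ := ih
    have h0 := wA_step v hv s w hw (fun _ => 1) (fun _ => 0) (by simp)
    have h1 := wA_step v hv s w hw (fun x => x) (fun _ => 1) (by simp)
    have h2 := wA_step v hv s w hw (fun x => x ^ 2) (fun x => x + v w) (by intro j; ring)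
    simp only [mul_one, mul_zero, Finset.sum_const_zero, mul_add, Finset.sum_add_distrib,
      ← Finset.sum_mul] at h0 h1 h2
    rw [h0, h1, h2, i0, i1, i2, Finset.card_insert_of_notMem hw, Finset.sum_insert hw,
      Finset.sum_insert hw]
    push_cast
    refine ⟨by ring, by ring, by ring⟩

/-- splitting off one index from a double product -/
lemma prod_prod_split {ι : Type*} [Fintype ι] [DecidableEq ι] (F : ι → ι → ℚ) (j : ι) :
    ∏ i, ∏ k, F i k = F j j * (∏ k ∈ univ.erase j, (F j k * F k j)) *
      ∏ i ∈ univ.erase j, ∏ k ∈ univ.erase j, F i k := by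
  rw [← Finset.mul_prod_erase univ (fun i => ∏ k, F i k) (mem_univ j)]
  rw [← Finset.mul_prod_erase univ (fun k => F j k) (mem_univ j)]
  have : ∀ i, ∏ k, F i k = F i j * ∏ k ∈ univ.erase j, F i k := fun i =>
    (Finset.mul_prod_erase univ (fun k => F i k) (mem_univ j)).symm
  simp only [this, Finset.prod_mul_distrib]
  ring

lemma vand_eq {n : ℕ} (v : Fin n → ℚ) : (Matrix.vandermonde v).det =
    ∏ i : Fin n, ∏ j : Fin n, if (i : ℕ) < (j : ℕ) then v j - v i else 1 := by
  rw [Matrix.det_vandermonde]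
  refine Finset.prod_congr rfl fun i _ => ?_
  rw [← Finset.prod_filter]
  refine Finset.prod_congr ?_ fun _ _ => rfl
  ext j; simp

lemma vand_update {n : ℕ} (v : Fin n → ℚ) (hv : Function.Injective v) (j : Fin n) :
    (Matrix.vandermonde (Function.update v j (v j - 2))).det =
      (Matrix.vandermonde v).det * wA v univ j := by
  rw [vand_eq, vand_eq, prod_prod_split _ j,
    prod_prod_split (fun i k : Fin n => if (i : ℕ) < (k : ℕ) then v k - v i else 1) j, wA]
  simp only [lt_irrefl, if_false, one_mul]
  conv_rhs => rw [mul_right_comm, ← Finset.prod_mul_distrib]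
  refine congrArg₂ (· * ·) ?_ ?_
  · refine Finset.prod_congr rfl fun k hk => ?_
    have hkj : k ≠ j := (Finset.mem_erase.1 hk).1
    have h0 : v j - v k ≠ 0 := sub_ne_zero.2 (fun h => hkj (hv h).symm)
    have hn : (k : ℕ) ≠ j := fun h => hkj (Fin.ext h)
    rcases lt_or_gt_of_ne hn with h | h
    · simp only [Function.update_self, Function.update_of_ne hkj, if_pos h, if_neg h.not_gt]
      field_simp
      ring
    · simp only [Function.update_self, Function.update_of_ne hkj, if_pos h, if_neg h.not_gt]
      field_simp
      ring
  · refine Finset.prod_congr rfl fun i hi => Finset.prod_congr rfl fun k hk => ?_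
    rw [Function.update_of_ne (Finset.mem_erase.1 hi).1,
      Function.update_of_ne (Finset.mem_erase.1 hk).1]

lemma det_desc {n : ℕ} (v : Fin n → ℚ) :
    (Matrix.of fun i j : Fin n => (descPochhammer ℚ (i : ℕ)).eval (v j)).det =
      (Matrix.vandermonde v).det := by
  rw [Matrix.det_eval_matrixOfPolynomials_eq_det_vandermonde v
    (fun i => descPochhammer ℚ (i : ℕ)) (fun i => descPochhammer_natDegree ℚ _)
    (fun i => monic_descPochhammer ℚ _), ← Matrix.det_transpose]
  rfl

lemma coeff_two_prod {ι : Type*} [DecidableEq ι] (s : Finset ι) (f : ι → ℚ[X])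
    (h : ∀ i, (f i).coeff 1 = 0) :
    (∏ i ∈ s, f i).coeff 0 = ∏ i ∈ s, (f i).coeff 0 ∧ (∏ i ∈ s, f i).coeff 1 = 0 ∧
    (∏ i ∈ s, f i).coeff 2 = ∑ j ∈ s, (f j).coeff 2 * ∏ k ∈ s.erase j, (f k).coeff 0 := by
  induction s using Finset.induction_on with
  | empty => simp [Polynomial.coeff_one]
  | insert w s hw ih =>
    obtain ⟨i0, i1, i2⟩ := ih
    rw [Finset.prod_insert hw, Finset.prod_insert hw]
    refine ⟨by rw [mul_coeff_zero, i0], by rw [mul_coeff_one, i1, h]; ring, ?_⟩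
    rw [Polynomial.coeff_mul, Finset.Nat.sum_antidiagonal_eq_sum_range_succ_mk]
    simp only [Finset.sum_range_succ, Finset.sum_range_zero]
    simp only [Nat.sub_zero, Nat.sub_self, h, zero_mul, i0, i2, Finset.sum_insert hw,
      Finset.erase_insert hw, Finset.mul_sum]
    rw [zero_add, add_zero, add_comm]
    congr 1
    refine Finset.sum_congr rfl fun j hj => ?_
    have hne : w ≠ j := fun h => hw (h ▸ hj)
    rw [Finset.erase_insert_of_ne hne, Finset.prod_insert (by simp [hw])]
    ring

lemma coeff_two_det {n : ℕ} (M : Matrix (Fin n) (Fin n) ℚ[X]) (h : ∀ i j, (M i j).coeff 1 = 0) :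
    M.det.coeff 2 = ∑ j, ((Matrix.of fun i k => (M i k).coeff 0).updateCol j
      (fun i => (M i j).coeff 2)).det := by
  simp only [Matrix.det_apply, Polynomial.finsetSum_coeff]
  rw [Finset.sum_comm]
  refine Finset.sum_congr rfl fun σ _ => ?_
  rw [← Finset.smul_sum, Polynomial.coeff_smul]
  congr 1
  rw [(coeff_two_prod univ (fun i => M (σ i) i) (fun i => h _ _)).2.2]
  refine Finset.sum_congr rfl fun j _ => ?_
  rw [← Finset.mul_prod_erase univ _ (mem_univ j), Matrix.updateCol_self]
  congr 1
  refine Finset.prod_congr rfl fun k hk => ?_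
  rw [Matrix.updateCol_ne (Finset.mem_erase.1 hk).1]
  rfl

lemma reflect_prod {ι : Type*} [DecidableEq ι] (s : Finset ι) (f : ι → ℚ[X]) (d : ι → ℕ)
    (h : ∀ i, (f i).natDegree ≤ d i) :
    (∏ i ∈ s, f i).natDegree ≤ ∑ i ∈ s, d i ∧
    reflect (∑ i ∈ s, d i) (∏ i ∈ s, f i) = ∏ i ∈ s, reflect (d i) (f i) := by
  induction s using Finset.induction_on with
  | empty => simp
  | insert w s hw ih =>
    rw [Finset.prod_insert hw, Finset.sum_insert hw, Finset.prod_insert hw]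
    exact ⟨natDegree_mul_le_of_le (h w) ih.1, by rw [reflect_mul _ _ (h w) ih.1, ih.2]⟩

lemma coeff_det_reflect {n : ℕ} (M : Matrix (Fin n) (Fin n) ℚ[X]) (d : Fin n → ℕ)
    (h : ∀ i j, (M i j).natDegree ≤ d j) (m : ℕ) (hm : m ≤ ∑ j, d j) :
    M.det.coeff (∑ j, d j - m) = (Matrix.of fun i j => reflect (d j) (M i j)).det.coeff m := by
  simp only [Matrix.det_apply, Polynomial.finsetSum_coeff]
  refine Finset.sum_congr rfl fun σ _ => ?_
  rw [Polynomial.coeff_smul, Polynomial.coeff_smul]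
  congr 1
  simp only [Matrix.of_apply]
  rw [← (reflect_prod univ (fun i => M (σ i) i) d (fun i => h _ _)).2, coeff_reflect,
    revAt_le hm]

/-- The row-scaled entries. -/
noncomputable def wE (n i : ℕ) : ℚ[X] :=
  X ^ i * (⇑derivative)^[i] ((hermite n).map (Int.castRingHom ℚ))

lemma wE_coeff (n i m : ℕ) :
    (wE n i).coeff m = (m.descFactorial i : ℚ) * ((hermite n).coeff m : ℚ) := by
  rw [wE, coeff_X_pow_mul']
  split_ifs with h
  · rw [coeff_iterate_derivative, Nat.sub_add_cancel h, nsmul_eq_mul, coeff_map]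
    simp
  · rw [Nat.descFactorial_eq_zero_iff_lt.2 (by omega)]; simp

lemma wE_natDegree (n i : ℕ) : (wE n i).natDegree ≤ n := by
  rw [natDegree_le_iff_coeff_eq_zero]
  intro m hm
  rw [wE_coeff, coeff_hermite_of_lt hm]; simp

lemma wE_r0 (n i : ℕ) : (reflect n (wE n i)).coeff 0 = (descPochhammer ℚ i).eval (n : ℚ) := by
  rw [coeff_reflect, revAt_le (Nat.zero_le _), Nat.sub_zero, wE_coeff, coeff_hermite_self,
    descPochhammer_eval_eq_descFactorial]
  simp

lemma wE_r1 (n i : ℕ) : (reflect n (wE n i)).coeff 1 = 0 := by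
  rw [coeff_reflect, wE_coeff]
  rcases n with _ | n
  · rw [coeff_hermite_of_lt]; simp
    simp [revAt]
  · rw [revAt_le (by omega), coeff_hermite_of_odd_add]; simp
    exact ⟨n, by omega⟩

lemma wE_r2 (n i : ℕ) : (reflect n (wE n i)).coeff 2 =
    -((n : ℚ) * (n - 1) / 2) * (descPochhammer ℚ i).eval ((n : ℚ) - 2) := by
  rw [coeff_reflect, wE_coeff]
  rcases n with _ | _ | n
  · rw [coeff_hermite_of_lt]; simp
    simp [revAt]
  · rw [coeff_hermite_of_lt]; simp
    simp [revAt]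
  · rw [revAt_le (by omega)]
    have h := coeff_hermite_explicit 1 n
    rw [show 2 * 1 + n = n + 1 + 1 by ring] at h
    rw [show n + 1 + 1 - 2 = n by omega, h]
    have e : ((n + 1 + 1 : ℕ) : ℚ) - 2 = n := by push_cast; ring
    rw [e, descPochhammer_eval_eq_descFactorial]
    have c : (n + 1 + 1).choose n = (n + 2).choose 2 := by
      rw [← Nat.choose_symm_add]
    rw [c]
    push_cast [Nat.cast_choose_two]
    simp
    ring

lemma wronskian_coeff {n : ℕ} (d : Fin n → ℕ) (hd : Function.Injective d)
    (hm : 2 ≤ ∑ j, d j) :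
    (Matrix.of fun i j : Fin n => wE (d j) i).det.coeff (∑ j, d j - 2) =
      -(Matrix.vandermonde (fun j => (d j : ℚ))).det *
        ∑ j, wA (fun j => (d j : ℚ)) univ j * ((d j : ℚ) * (d j - 1) / 2) := by
  have hv : Function.Injective (fun j => (d j : ℚ)) := fun a b h => hd (Nat.cast_injective h)
  rw [coeff_det_reflect (Matrix.of fun i j : Fin n => wE (d j) i) d
    (fun i j => wE_natDegree _ _) 2 hm, coeff_two_det]
  · rw [Finset.mul_sum]
    refine Finset.sum_congr rfl fun j _ => ?_
    simp only [Matrix.of_apply, wE_r0, wE_r2]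
    have : (fun i : Fin n => -((d j : ℚ) * (d j - 1) / 2) *
        (descPochhammer ℚ (i : ℕ)).eval ((d j : ℚ) - 2)) = (-((d j : ℚ) * (d j - 1) / 2)) •
        (fun i : Fin n => (descPochhammer ℚ (i : ℕ)).eval ((d j : ℚ) - 2)) := rfl
    rw [this, Matrix.det_updateCol_smul]
    have h2 := vand_update _ hv j
    rw [← det_desc] at h2
    have h3 : ((Matrix.of fun i k : Fin n => (descPochhammer ℚ (i : ℕ)).eval (d k : ℚ)).updateCol j
        (fun i : Fin n => (descPochhammer ℚ (i : ℕ)).eval ((d j : ℚ) - 2))) =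
        (Matrix.of fun i k : Fin n => (descPochhammer ℚ (i : ℕ)).eval
          (Function.update (fun j => (d j : ℚ)) j ((d j : ℚ) - 2) k)) := by
      ext i k
      by_cases hk : k = j
      · subst hk; simp
      · simp [hk]
    rw [h3, h2]
    ring
  · intro i j
    exact wE_r1 _ _

lemma degVec_injective (l : List ℕ) (hl : IsPartition l) : Function.Injective (degVec l) := by
  have key : ∀ i j : Fin l.length, i < j → degVec l j < degVec l i := by
    intro i j hij
    have h := List.pairwise_iff_get.1 hl.1 i j hij
    have h1 : (i : ℕ) < j := hij
    have h2 := j.2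
    simp only [degVec]
    omega
  intro i j h
  rcases lt_trichotomy i j with h1 | h1 | h1
  · have := key i j h1; omega
  · exact h1
  · have := key j i h1; omega

lemma sum_fin_rev (n : ℕ) (f : ℕ → ℚ) :
    ∑ i : Fin n, f (n - 1 - (i : ℕ)) = ∑ i ∈ range n, f i := by
  rw [Fin.sum_univ_eq_sum_range (fun i => f (n - 1 - i)) n, Finset.sum_range_reflect]

lemma sum_degVec (l : List ℕ) : ∑ j, degVec l j = l.sum + ∑ i : Fin l.length, (i : ℕ) := by
  simp only [degVec, Finset.sum_add_distrib]
  congr 1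
  · exact (Fin.sum_univ_getElem l)
  · rw [Fin.sum_univ_eq_sum_range (fun i => l.length - 1 - i), Fin.sum_univ_eq_sum_range (fun i => i)]
    exact Finset.sum_range_reflect (fun i => i) _

lemma row_sum (a i : ℕ) : ∑ j ∈ Finset.Icc 1 a, (((j : ℤ) : ℚ) - ((i : ℚ) + 1)) =
    ((a : ℚ) ^ 2 - (2 * i + 1) * a) / 2 := by
  induction a with
  | zero => simp
  | succ a ih =>
    rw [Finset.sum_Icc_succ_top (by omega), ih]; push_cast; ring

lemma range_sums (n : ℕ) : ∑ i ∈ range n, (i : ℚ) = n * (n - 1) / 2 ∧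
    ∑ i ∈ range n, (i : ℚ) ^ 2 = n * (n - 1) * (2 * n - 1) / 6 := by
  induction n with
  | zero => simp
  | succ n ih => 
    rw [sum_range_succ, sum_range_succ, ih.1, ih.2]; push_cast; constructor <;> ring

lemma content_identity (l : List ℕ) (hl : IsPartition l) :
    ∑ j, wA (fun j => (degVec l j : ℚ)) univ j * ((degVec l j : ℚ) * (degVec l j - 1) / 2) =
      (contentSum l : ℚ) := by
  have hv : Function.Injective (fun j => (degVec l j : ℚ)) :=
    fun a b h => degVec_injective l hl (Nat.cast_injective h)
  obtain ⟨-, s1, s2⟩ := wA_sums _ hv univ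
  have e1 : ∑ j, wA (fun j => (degVec l j : ℚ)) univ j *
      ((degVec l j : ℚ) * (degVec l j - 1) / 2) =
      (∑ j, wA (fun j => (degVec l j : ℚ)) univ j * (degVec l j : ℚ) ^ 2 -
       ∑ j, wA (fun j => (degVec l j : ℚ)) univ j * (degVec l j : ℚ)) / 2 := by
    rw [← Finset.sum_sub_distrib, Finset.sum_div]
    exact Finset.sum_congr rfl fun j _ => by ring
  rw [e1, s1, s2, Finset.card_univ, Fintype.card_fin, contentSum]
  push_cast
  have e2 : ∑ i : Fin l.length, ∑ j ∈ Finset.Icc 1 (l.get i), ((j : ℚ) - ((i : ℕ) + 1)) =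
      ∑ i : Fin l.length, ((l.get i : ℚ) ^ 2 - (2 * (i : ℕ) + 1) * (l.get i : ℚ)) / 2 :=
    Finset.sum_congr rfl fun i _ => by simpa using row_sum (l.get i) i
  rw [e2]
  set n := l.length with hn
  have e3 : ∀ i : Fin n, ((l.get i : ℚ) ^ 2 - (2 * (i : ℕ) + 1) * (l.get i : ℚ)) / 2 =
      ((degVec l i : ℚ) ^ 2 - (2 * n - 1) * (degVec l i : ℚ)
        - (((n - 1 - (i : ℕ) : ℕ) : ℚ) ^ 2 - (2 * n - 1) * ((n - 1 - (i : ℕ) : ℕ) : ℚ))) / 2 := by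
    intro i
    have hi := i.2
    have : ((n - 1 - (i : ℕ) : ℕ) : ℚ) = n - 1 - (i : ℕ) := by
      rw [Nat.cast_sub (by omega), Nat.cast_sub (by omega)]; simp
    simp only [degVec, ← hn]
    rw [Nat.cast_add, this]
    ring
  rw [Finset.sum_congr rfl fun i _ => e3 i, ← Finset.sum_div, Finset.sum_sub_distrib,
    Finset.sum_sub_distrib, Finset.sum_sub_distrib, ← Finset.mul_sum, ← Finset.mul_sum,
    sum_fin_rev n (fun k => (k : ℚ) ^ 2), sum_fin_rev n (fun k => (k : ℚ)),
    (range_sums n).1, (range_sums n).2]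
  ring

end Aux

/-- The subleading coefficient of the remainder polynomial:
`coeff_{|λ|−2}(He_λ) = −c(λ)`. -/
theorem wronskianHermite_subleading_coeff (l : List ℕ) (hl : IsPartition l)
    (h2 : 2 ≤ l.sum) :
    (HeW l).coeff (l.sum - 2) = -(contentSum l : ℚ) := by
  have hd := degVec_injective l hl
  have hs := sum_degVec l
  have h := wronskian_coeff (degVec l) hd (by omega)
  rw [content_identity l hl] at h
  have hdet : (Matrix.of fun i j : Fin l.length => wE (degVec l j) i).det =
      Polynomial.X ^ (∑ i : Fin l.length, (i : ℕ)) * (Matrix.of fun i j : Fin l.length =>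
      (⇑Polynomial.derivative)^[(i : ℕ)]
        ((Polynomial.hermite (degVec l j)).map (Int.castRingHom ℚ))).det := by
    rw [← Finset.prod_pow_eq_pow_sum, ← Matrix.det_mul_column]
    rfl
  have hV : vanderQ l = (Matrix.vandermonde (fun j => (degVec l j : ℚ))).det :=
    (vand_eq _).symm
  have hV0 : vanderQ l ≠ 0 := by
    rw [hV, Matrix.det_vandermonde_ne_zero_iff]
    exact fun a b h => hd (Nat.cast_injective h)
  rw [hdet, ← hV, show ∑ j, degVec l j - 2 = (l.sum - 2) + ∑ i : Fin l.length, (i : ℕ) by omega,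
    Polynomial.coeff_X_pow_mul] at h
  rw [HeW, Polynomial.coeff_C_mul, h]
  field_simp
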